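/- arXiv:1308.0758 — 2 statements merged into one kernel-verified Lean document; each statement's English description precedes it below -/
import Mathlib

section
/- For a ring R the following are equivalent: (1) R is a dual ring; (2) R is a semilocal and small dual ring; (3) R is a semiperfect and small dual ring. -/
open Pointwise

/-- The left annihilator `l(X) = {r : ∀ x ∈ X, r * x = 0}` of a subset of a ring. -/
def lAnn (R : Type*) [Ring R] (X : Set R) : Set R := {r : R | ∀ x ∈ X, r * x = 0}

/-- The right annihilator `r(X) = {r : ∀ x ∈ X, x * r = 0}` of a subset of a ring. -/
def rAnn (R : Type*) [Ring R] (X : Set R) : Set R := {r : R | ∀ x ∈ X, x * r = 0}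

/-- A right ideal of `R` (a submodule of `R` as a right `R`-module, i.e. an
`Rᵐᵒᵖ`-submodule) is small if `I + K ≠ R` for every proper right ideal `K`. -/
def IsSmallRightIdeal (R : Type*) [Ring R] (I : Submodule Rᵐᵒᵖ R) : Prop :=
  ∀ K : Submodule Rᵐᵒᵖ R, K ≠ ⊤ → I ⊔ K ≠ ⊤

/-- A left ideal of `R` is small if `I + K ≠ R` for every proper left ideal `K`. -/
def IsSmallLeftIdeal (R : Type*) [Ring R] (I : Ideal R) : Prop :=
  ∀ K : Ideal R, K ≠ ⊤ → I ⊔ K ≠ ⊤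

/-- `R` is right small dual if `rl(I) = I` for every small right ideal `I`. -/
def IsRightSmallDual (R : Type*) [Ring R] : Prop :=
  ∀ I : Submodule Rᵐᵒᵖ R, IsSmallRightIdeal R I → rAnn R (lAnn R (I : Set R)) = (I : Set R)

/-- `R` is left small dual if `lr(I) = I` for every small left ideal `I`. -/
def IsLeftSmallDual (R : Type*) [Ring R] : Prop :=
  ∀ I : Ideal R, IsSmallLeftIdeal R I → lAnn R (rAnn R (I : Set R)) = (I : Set R)

/-- `R` is right dual if `rl(I) = I` for every right ideal `I`. -/
def IsRightDual (R : Type*) [Ring R] : Prop :=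
  ∀ I : Submodule Rᵐᵒᵖ R, rAnn R (lAnn R (I : Set R)) = (I : Set R)

/-- `R` is left dual if `lr(I) = I` for every left ideal `I`. -/
def IsLeftDual (R : Type*) [Ring R] : Prop :=
  ∀ I : Ideal R, lAnn R (rAnn R (I : Set R)) = (I : Set R)

/-- A right `R`-module is torsionless if its nonzero elements are separated by
right `R`-linear maps to `R`. -/
def IsTorsionlessRight (R : Type*) [Ring R] (M : Type*) [AddCommGroup M] [Module Rᵐᵒᵖ M] : Prop :=
  ∀ m : M, m ≠ 0 → ∃ f : M →ₗ[Rᵐᵒᵖ] R, f m ≠ 0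

/-- The left annihilator of a subset, as a left ideal. -/
def lAnnIdeal (R : Type*) [Ring R] (X : Set R) : Ideal R where
  carrier := {r : R | ∀ x ∈ X, r * x = 0}
  add_mem' := fun {a b} ha hb x hx => by rw [add_mul, ha x hx, hb x hx, add_zero]
  zero_mem' := fun x _ => zero_mul x
  smul_mem' := fun c a ha x hx => by
    simp only [smul_eq_mul, Set.mem_setOf_eq] at *
    rw [mul_assoc, ha x hx, mul_zero]

/-- A right ideal `I` has a weak supplement if there is a right ideal `K` with
`I + K = R` and `I ∩ K` small. -/
def HasWeakSupplementRight (R : Type*) [Ring R] (I : Submodule Rᵐᵒᵖ R) : Prop :=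
  ∃ K : Submodule Rᵐᵒᵖ R, I ⊔ K = ⊤ ∧ IsSmallRightIdeal R (I ⊓ K)

/-- A left ideal `I` has a weak supplement if there is a left ideal `K` with
`I + K = R` and `I ∩ K` small. -/
def HasWeakSupplementLeft (R : Type*) [Ring R] (I : Ideal R) : Prop :=
  ∃ K : Ideal R, I ⊔ K = ⊤ ∧ IsSmallLeftIdeal R (I ⊓ K)

/-- `R` is semilocal if `R/J(R)` is a semisimple ring (equivalently, a semisimple
left `R`-module). -/
def IsSemilocalRing (R : Type*) [Ring R] : Prop :=
  IsSemisimpleModule R (R ⧸ Ideal.jacobson (⊥ : Ideal R))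

/-- `R` is semiperfect if it is semilocal and idempotents lift modulo `J(R)`. -/
def IsSemiperfectRing (R : Type*) [Ring R] : Prop :=
  IsSemilocalRing R ∧
    ∀ a : R, a * a - a ∈ Ideal.jacobson (⊥ : Ideal R) →
      ∃ e : R, e * e = e ∧ e - a ∈ Ideal.jacobson (⊥ : Ideal R)

/-- `R` is `J`-regular if `R/J(R)` is von Neumann regular. -/
def IsJRegular (R : Type*) [Ring R] : Prop :=
  ∀ a : R, ∃ b : R, a * b * a - a ∈ Ideal.jacobson (⊥ : Ideal R)

/-- `R` is left perfect: `R/J(R)` is semisimple and `J(R)` is left T-nilpotent. -/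
def IsLeftPerfect (R : Type*) [Ring R] : Prop :=
  IsSemilocalRing R ∧
    ∀ a : ℕ → R, (∀ i, a i ∈ Ideal.jacobson (⊥ : Ideal R)) →
      ∃ n : ℕ, (List.ofFn fun i : Fin (n + 1) => a i).prod = 0

/-- A right ideal `E` is essential if `E ∩ T ≠ 0` for every nonzero right ideal `T`. -/
def IsEssentialRightIdeal (R : Type*) [Ring R] (E : Submodule Rᵐᵒᵖ R) : Prop :=
  ∀ T : Submodule Rᵐᵒᵖ R, T ≠ ⊥ → E ⊓ T ≠ ⊥

namespace DualAux

variable {R : Type*} [Ring R]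

/-- The right annihilator as a right ideal. -/
def rAnnIdeal (X : Set R) : Submodule Rᵐᵒᵖ R where
  carrier := rAnn R X
  add_mem' := fun {a b} ha hb x hx => by rw [mul_add, ha x hx, hb x hx, add_zero]
  zero_mem' := fun x _ => mul_zero x
  smul_mem' := fun c a ha x hx => by
    rw [MulOpposite.smul_eq_mul_unop, ← mul_assoc, ha x hx, zero_mul]

theorem mul_mem_right (I : Submodule Rᵐᵒᵖ R) {a : R} (ha : a ∈ I) (b : R) : a * b ∈ I := by
  have := I.smul_mem (MulOpposite.op b) ha
  rwa [MulOpposite.smul_eq_mul_unop] at this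

/-- Elements of `1 + J` are two-sided units. -/
theorem isUnit_one_sub {j : R} (hj : j ∈ Ideal.jacobson (⊥ : Ideal R)) : IsUnit (1 - j) := by
  have key : ∀ r : R, r - 1 ∈ Ideal.jacobson (⊥ : Ideal R) → ∃ s, s * r = 1 := fun r hr => by
    obtain ⟨s, hs⟩ := Ideal.exists_mul_sub_mem_of_sub_one_mem_jacobson r hr
    exact ⟨s, sub_eq_zero.1 (by simpa using hs)⟩
  obtain ⟨u, hu⟩ := key (1 - j) (by simpa using hj)
  obtain ⟨v, hv⟩ := key u (by
    have : u - 1 = u * j := by rw [← hu]; noncomm_ring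
    rw [this]; exact Ideal.mul_mem_left _ _ hj)
  have hv' : v = 1 - j := by
    calc v = v * (u * (1 - j)) := by rw [hu, mul_one]
      _ = 1 - j := by rw [← mul_assoc, hv, one_mul]
  subst hv'
  exact ⟨⟨1 - j, u, hv, hu⟩, rfl⟩

theorem small_left {I : Ideal R} (h : ∀ x ∈ I, x ∈ Ideal.jacobson (⊥ : Ideal R)) :
    IsSmallLeftIdeal R I := by
  intro K hK hIK
  apply hK
  have h1 : (1 : R) ∈ I ⊔ K := by rw [hIK]; trivial
  obtain ⟨i, hi, k, hk, hik⟩ := Submodule.mem_sup.1 h1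
  have hu := isUnit_one_sub (h i hi)
  have : 1 - i = k := by rw [← hik]; abel
  rw [this] at hu
  exact Ideal.eq_top_of_isUnit_mem _ hk hu

theorem small_right {I : Submodule Rᵐᵒᵖ R} (h : ∀ x ∈ I, x ∈ Ideal.jacobson (⊥ : Ideal R)) :
    IsSmallRightIdeal R I := by
  intro K hK hIK
  apply hK
  have h1 : (1 : R) ∈ I ⊔ K := by rw [hIK]; trivial
  obtain ⟨i, hi, k, hk, hik⟩ := Submodule.mem_sup.1 h1
  have hu := isUnit_one_sub (h i hi)
  have : 1 - i = k := by rw [← hik]; abel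
  rw [this] at hu
  obtain ⟨u, rfl⟩ := hu
  rw [eq_top_iff]
  intro x _
  have := mul_mem_right K hk (((u⁻¹ : Rˣ) : R) * x)
  simpa using this

theorem semisimple_quot (h : IsSemilocalRing R) :
    IsSemisimpleRing (R ⧸ Ideal.jacobson (⊥ : Ideal R)) := by
  let l : (R ⧸ Ideal.jacobson (⊥ : Ideal R)) →ₛₗ[Ideal.Quotient.mk (Ideal.jacobson (⊥ : Ideal R))]
      (R ⧸ Ideal.jacobson (⊥ : Ideal R)) :=
    { toFun := id
      map_add' := fun _ _ => rfl
      map_smul' := fun r x => by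
        obtain ⟨x, rfl⟩ := Ideal.Quotient.mk_surjective x
        rfl }
  have : RingHomSurjective (Ideal.Quotient.mk (Ideal.jacobson (⊥ : Ideal R))) :=
    ⟨Ideal.Quotient.mk_surjective⟩
  exact (LinearMap.isSemisimpleModule_iff_of_bijective l Function.bijective_id).1 h

theorem weakSuppl_left (h : IsSemilocalRing R) (I : Ideal R) : HasWeakSupplementLeft R I := by
  unfold IsSemilocalRing at h
  obtain ⟨Q, hQ⟩ := exists_isCompl (Submodule.map (Submodule.mkQ (Ideal.jacobson (⊥ : Ideal R))) I :
    Submodule R (R ⧸ Ideal.jacobson (⊥ : Ideal R)))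
  refine ⟨Q.comap (Submodule.mkQ (Ideal.jacobson (⊥ : Ideal R))), ?_, small_left ?_⟩
  · rw [eq_top_iff]
    intro x _
    have hx : Submodule.mkQ (Ideal.jacobson (⊥ : Ideal R)) x ∈
        Submodule.map (Submodule.mkQ (Ideal.jacobson (⊥ : Ideal R))) I ⊔ Q := by
      rw [hQ.sup_eq_top]; trivial
    obtain ⟨y, ⟨i, hi, rfl⟩, q, hq, hyq⟩ := Submodule.mem_sup.1 hx
    refine Submodule.mem_sup.2 ⟨i, hi, x - i, ?_, by abel⟩
    rw [Submodule.mem_comap, map_sub, ← hyq, add_sub_cancel_left]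
    exact hq
  · rintro x ⟨hx1, hx2⟩
    have : Submodule.mkQ (Ideal.jacobson (⊥ : Ideal R)) x = 0 :=
      Submodule.disjoint_def.1 hQ.disjoint _ (Submodule.mem_map_of_mem hx1) hx2
    exact (Submodule.Quotient.mk_eq_zero _).1 this

theorem weakSuppl_right (h : IsSemilocalRing R) (I : Submodule Rᵐᵒᵖ R) :
    HasWeakSupplementRight R I := by
  have := semisimple_quot h
  let S := R ⧸ Ideal.jacobson (⊥ : Ideal R)
  let f : R →+* S := Ideal.Quotient.mk (Ideal.jacobson (⊥ : Ideal R))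
  have hf : Function.Surjective f := Ideal.Quotient.mk_surjective
  let P : Submodule Sᵐᵒᵖ S :=
    { carrier := f '' I
      add_mem' := by
        rintro _ _ ⟨a, ha, rfl⟩ ⟨b, hb, rfl⟩
        exact ⟨a + b, I.add_mem ha hb, map_add _ _ _⟩
      zero_mem' := ⟨0, I.zero_mem, map_zero _⟩
      smul_mem' := by
        rintro c _ ⟨a, ha, rfl⟩
        obtain ⟨d, hd⟩ := hf c.unop
        refine ⟨a * d, mul_mem_right I ha d, ?_⟩
        rw [MulOpposite.smul_eq_mul_unop, map_mul, hd] }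
  have : IsSemisimpleRing S := semisimple_quot h
  obtain ⟨Q, hQ⟩ := exists_isCompl P
  let K : Submodule Rᵐᵒᵖ R :=
    { carrier := f ⁻¹' Q
      add_mem' := by
        intro a b ha hb
        simp only [Set.mem_preimage, map_add] at *
        exact Q.add_mem ha hb
      zero_mem' := by simp
      smul_mem' := by
        intro c a ha
        simp only [Set.mem_preimage, MulOpposite.smul_eq_mul_unop, map_mul] at *
        exact mul_mem_right Q ha _ }
  refine ⟨K, ?_, small_right ?_⟩
  · rw [eq_top_iff]
    intro x _
    have hx : f x ∈ P ⊔ Q := by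
      rw [hQ.sup_eq_top]; trivial
    obtain ⟨y, ⟨i, hi, rfl⟩, q, hq, hyq⟩ := Submodule.mem_sup.1 hx
    refine Submodule.mem_sup.2 ⟨i, hi, x - i, ?_, by abel⟩
    change f (x - i) ∈ Q
    rw [map_sub, ← hyq, add_sub_cancel_left]
    exact hq
  · rintro x ⟨hx1, hx2⟩
    have : f x = 0 := Submodule.disjoint_def.1 hQ.disjoint _ ⟨x, hx1, rfl⟩ hx2
    exact Ideal.Quotient.eq_zero_iff_mem.1 this

theorem rightDual_of (h : IsSemilocalRing R) (hd : IsRightSmallDual R) : IsRightDual R := by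
  intro I
  obtain ⟨K, hIK, hs⟩ := weakSuppl_right h I
  have hd' := hd _ hs
  refine Set.Subset.antisymm ?_ (fun x hx y hy => hy x hx)
  intro x hx
  have h1 : (1 : R) ∈ I ⊔ K := by rw [hIK]; trivial
  obtain ⟨i0, hi0, k0, hk0, h10⟩ := Submodule.mem_sup.1 h1
  have hxe : x = i0 * x + k0 * x := by rw [← add_mul, h10, one_mul]
  have hkx : k0 * x ∈ rAnn R (lAnn R ((I ⊓ K : Submodule Rᵐᵒᵖ R) : Set R)) := by
    intro y hy
    have hyk : ∀ k ∈ K, y * i0 * k = 0 := by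
      intro k hk
      have e : i0 * k = k - k0 * k := by
        rw [eq_sub_iff_add_eq, ← add_mul, h10, one_mul]
      rw [mul_assoc]
      exact hy _ ⟨mul_mem_right I hi0 k, by rw [e]; exact K.sub_mem hk (mul_mem_right K hk0 k)⟩
    have hyi : y - y * i0 ∈ lAnn R (I : Set R) := by
      intro i hi
      have e : k0 * i = i - i0 * i := by
        rw [eq_sub_iff_add_eq', ← add_mul, h10, one_mul]
      have e2 : (y - y * i0) * i = y * (k0 * i) := by rw [e]; noncomm_ring
      rw [e2]
      exact hy _ ⟨by rw [e]; exact I.sub_mem hi (mul_mem_right I hi0 i), mul_mem_right K hk0 i⟩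
    have a1 : (y - y * i0) * x = 0 := hx _ hyi
    have a2 : y * i0 * (k0 * x) = 0 := hyk _ (mul_mem_right K hk0 x)
    have a3 : y * k0 * (i0 * x) + y * k0 * (k0 * x) = y * k0 * x := by
      rw [← mul_add, ← hxe]
    have e3 : y - y * i0 = y * k0 := by
      rw [sub_eq_iff_eq_add', ← mul_add, h10, mul_one]
    rw [← mul_assoc, ← e3, a1]
  rw [hd'] at hkx
  rw [SetLike.mem_coe, hxe]
  exact I.add_mem (mul_mem_right I hi0 x) hkx.1

theorem leftDual_of (h : IsSemilocalRing R) (hd : IsLeftSmallDual R) : IsLeftDual R := by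
  intro I
  obtain ⟨K, hIK, hs⟩ := weakSuppl_left h I
  have hd' := hd _ hs
  refine Set.Subset.antisymm ?_ (fun x hx y hy => hy x hx)
  intro x hx
  have h1 : (1 : R) ∈ I ⊔ K := by rw [hIK]; trivial
  obtain ⟨i0, hi0, k0, hk0, h10⟩ := Submodule.mem_sup.1 h1
  have hxe : x = x * i0 + x * k0 := by rw [← mul_add, h10, mul_one]
  have hkx : x * k0 ∈ lAnn R (rAnn R ((I ⊓ K : Ideal R) : Set R)) := by
    intro y hy
    have hyi : y - i0 * y ∈ rAnn R (I : Set R) := by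
      intro i hi
      have e : i * k0 = i - i * i0 := by
        rw [eq_sub_iff_add_eq', ← mul_add, h10, mul_one]
      have e2 : i * (y - i0 * y) = (i * k0) * y := by rw [e]; noncomm_ring
      rw [e2]
      exact hy _ ⟨by rw [e]; exact I.sub_mem hi (I.mul_mem_left _ hi0), K.mul_mem_left _ hk0⟩
    have a1 : x * (y - i0 * y) = 0 := hx _ hyi
    have e3 : y - i0 * y = k0 * y := by
      rw [sub_eq_iff_eq_add', ← add_mul, h10, one_mul]
    rw [mul_assoc, ← e3, a1]
  rw [hd'] at hkx
  rw [SetLike.mem_coe, hxe]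
  exact I.add_mem (I.mul_mem_left _ hi0) hkx.1

/-- Zorn: maximal submodules disjoint from a given one. -/
theorem exists_max_disjoint {A M : Type*} [Ring A] [AddCommGroup M] [Module A M]
    (P Q : Submodule A M) (h : Disjoint P Q) :
    ∃ T : Submodule A M, P ≤ T ∧ Disjoint T Q ∧
      ∀ T' : Submodule A M, T ≤ T' → Disjoint T' Q → T' ≤ T := by
  obtain ⟨T, hPT, hT⟩ := zorn_le_nonempty₀ {T : Submodule A M | Disjoint T Q} (by
    intro c hc hch y hy
    refine ⟨sSup c, ?_, fun z hz => le_sSup hz⟩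
    rw [Set.mem_setOf_eq, hch.directedOn.disjoint_sSup_left]
    exact fun b hb => hc hb) P h
  exact ⟨T, hPT, hT.prop, fun T' h1 h2 => hT.le_of_ge h2 h1⟩

/-- The sum of a submodule and a maximal disjoint one is essential. -/
theorem essential_of_max {A M : Type*} [Ring A] [AddCommGroup M] [Module A M]
    {T Q : Submodule A M} (h : Disjoint T Q)
    (hmax : ∀ T' : Submodule A M, T ≤ T' → Disjoint T' Q → T' ≤ T)
    (N : Submodule A M) (hN : Disjoint N (T ⊔ Q)) : N = ⊥ := by
  have h1 : Disjoint (N ⊔ T) Q := by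
    rw [Submodule.disjoint_def]
    intro x hx hxQ
    obtain ⟨n, hn, t, ht, rfl⟩ := Submodule.mem_sup.1 hx
    have hn0 : n = 0 := Submodule.disjoint_def.1 hN n hn
      (Submodule.mem_sup.2 ⟨-t, T.neg_mem ht, n + t, hxQ, by abel⟩)
    subst hn0
    rw [zero_add] at hxQ ⊢
    exact Submodule.disjoint_def.1 h t ht hxQ
  have h2 : N ≤ T := le_sup_left.trans (hmax _ le_sup_right h1)
  exact disjoint_self.1 (hN.mono_right (h2.trans le_sup_left))

theorem semilocal_of_dual (hl : IsLeftDual R) (hr : IsRightDual R) : IsSemilocalRing R := by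
  have key : ∀ I : Ideal R, ∃ K : Ideal R, I ⊔ K = ⊤ ∧
      ∀ x ∈ I, x ∈ K → x ∈ Ideal.jacobson (⊥ : Ideal R) := by
    intro I
    obtain ⟨T, -, hT, hmax⟩ := exists_max_disjoint (⊥ : Submodule Rᵐᵒᵖ R)
      (rAnnIdeal (I : Set R)) disjoint_bot_left
    refine ⟨lAnnIdeal R (T : Set R), ?_, ?_⟩
    · rw [eq_top_iff]
      intro x _
      have : x ∈ lAnn R (rAnn R ((I ⊔ lAnnIdeal R (T : Set R) : Ideal R) : Set R)) := by
        intro y hy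
        have hyI : y ∈ rAnnIdeal (I : Set R) := fun i hi => hy i (Ideal.mem_sup_left hi)
        have hyT : y ∈ (T : Set R) := by
          rw [← hr T]
          exact fun k hk => hy k (Ideal.mem_sup_right hk)
        rw [Submodule.disjoint_def.1 hT y hyT hyI, mul_zero]
      rw [hl] at this
      exact this
    · intro x hxI hxK
      rw [Ideal.jacobson, Ideal.mem_sInf]
      rintro N ⟨-, hN⟩
      have hne : rAnnIdeal (N : Set R) ⊓ (T ⊔ rAnnIdeal (I : Set R)) ≠ ⊥ := by
        intro h0
        have h1 := essential_of_max hT hmax (rAnnIdeal (N : Set R)) (disjoint_iff.2 h0)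
        apply hN.ne_top
        rw [Ideal.eq_top_iff_one]
        have : (1 : R) ∈ lAnn R (rAnn R (N : Set R)) := by
          intro y hy
          have : y ∈ rAnnIdeal (N : Set R) := hy
          rw [h1, Submodule.mem_bot] at this
          rw [this, mul_zero]
        rw [hl] at this
        exact this
      obtain ⟨s, ⟨hsN, hs⟩, hs0⟩ := Submodule.exists_mem_ne_zero_of_ne_bot hne
      have hNs : N ≤ lAnnIdeal R {s} := by
        intro n hn y hy
        rw [Set.mem_singleton_iff.1 hy]
        exact hsN n hn
      have hNe : N = lAnnIdeal R {s} := hN.eq_of_le (by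
        intro ht
        have : (1 : R) ∈ lAnnIdeal R {s} := by rw [ht]; trivial
        exact hs0 (by simpa using this s rfl)) hNs
      rw [hNe]
      intro y hy
      rw [Set.mem_singleton_iff.1 hy]
      obtain ⟨t, ht, u, hu, rfl⟩ := Submodule.mem_sup.1 hs
      rw [mul_add, hxK t ht, hu x hxI, add_zero]
  unfold IsSemilocalRing
  rw [isSemisimpleModule_iff]
  refine ⟨fun P => ?_⟩
  obtain ⟨K, hK1, hK2⟩ := key (P.comap (Submodule.mkQ (Ideal.jacobson (⊥ : Ideal R))))
  refine ⟨Submodule.map (Submodule.mkQ (Ideal.jacobson (⊥ : Ideal R))) K, ?_, ?_⟩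
  · rw [Submodule.disjoint_def]
    rintro _ hx ⟨k, hk, rfl⟩
    exact (Submodule.Quotient.mk_eq_zero _).2 (hK2 k hx hk)
  · rw [codisjoint_iff, eq_top_iff]
    intro x _
    obtain ⟨x, rfl⟩ := Submodule.mkQ_surjective _ x
    have : x ∈ P.comap (Submodule.mkQ (Ideal.jacobson (⊥ : Ideal R))) ⊔ K := by
      rw [hK1]; trivial
    obtain ⟨i, hi, k, hk, rfl⟩ := Submodule.mem_sup.1 this
    rw [map_add]
    exact Submodule.add_mem_sup hi (Submodule.mem_map_of_mem hk)

/-- Mutually maximal disjoint left ideals come from an idempotent. -/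
theorem exists_idem (hl : IsLeftDual R) (hr : IsRightDual R) (L M : Ideal R)
    (hLM : Disjoint L M) (hL : ∀ T : Ideal R, L ≤ T → Disjoint T M → T ≤ L)
    (hM : ∀ T : Ideal R, M ≤ T → Disjoint T L → T ≤ M) :
    ∃ x : R, x * x = x ∧ (∀ a ∈ L, a * x = 0) ∧ (∀ a ∈ M, a * (1 - x) = 0) := by
  have h1 : (1 : R) ∈ ((rAnnIdeal (L : Set R) ⊔ rAnnIdeal (M : Set R) : Submodule Rᵐᵒᵖ R) :
      Set R) := by
    rw [← hr]
    intro y hy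
    have hyL : y ∈ (L : Set R) := by
      rw [← hl L]
      exact fun z hz => hy z (Submodule.mem_sup_left (show z ∈ rAnnIdeal (L : Set R) from hz))
    have hyM : y ∈ (M : Set R) := by
      rw [← hl M]
      exact fun z hz => hy z (Submodule.mem_sup_right (show z ∈ rAnnIdeal (M : Set R) from hz))
    rw [Submodule.disjoint_def.1 hLM y hyL hyM, zero_mul]
  obtain ⟨x, hx, y, hy, hxy⟩ := Submodule.mem_sup.1 h1
  have hLx : ∀ a ∈ L, a * x = 0 := hx
  have hMy : ∀ a ∈ M, a * y = 0 := hy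
  have hLy : ∀ a ∈ L, a * y = a := fun a ha => by
    have : a * (x + y) = a := by rw [hxy, mul_one]
    rwa [mul_add, hLx a ha, zero_add] at this
  have hMx : ∀ a ∈ M, a * x = a := fun a ha => by
    have : a * (x + y) = a := by rw [hxy, mul_one]
    rwa [mul_add, hMy a ha, add_zero] at this
  -- `l(x * x) = l(x) = L`
  have hx2 : ∀ r : R, r * x * x = 0 → r ∈ L := by
    intro r hr
    refine hL (lAnnIdeal R {x * x}) ?_ ?_ (x := r) ?_
    · intro a ha z hz
      rw [Set.mem_singleton_iff.1 hz, ← mul_assoc, hLx a ha, zero_mul]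
    · rw [Submodule.disjoint_def]
      intro a ha haM
      have := ha _ rfl
      rwa [← mul_assoc, hMx a haM, hMx a haM] at this
    · intro z hz
      rw [Set.mem_singleton_iff.1 hz, ← mul_assoc, hr]
  have hy2 : ∀ r : R, r * y * y = 0 → r ∈ M := by
    intro r hr
    refine hM (lAnnIdeal R {y * y}) ?_ ?_ (x := r) ?_
    · intro a ha z hz
      rw [Set.mem_singleton_iff.1 hz, ← mul_assoc, hMy a ha, zero_mul]
    · rw [Submodule.disjoint_def]
      intro a ha haL
      have := ha _ rfl
      rwa [← mul_assoc, hLy a haL, hLy a haL] at this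
    · intro z hz
      rw [Set.mem_singleton_iff.1 hz, ← mul_assoc, hr]
  have hyx : y = 1 - x := by rw [← hxy]; abel
  have hcomm : x * y = y * x := by rw [hyx]; noncomm_ring
  have hN : Ideal.span {x * y} = ⊥ := by
    apply essential_of_max hLM hL
    rw [Submodule.disjoint_def]
    intro z hz hz2
    obtain ⟨r, rfl⟩ := Ideal.mem_span_singleton'.1 hz
    obtain ⟨a, ha, b, hb, hab⟩ := Submodule.mem_sup.1 hz2
    have e0 : r * (x * y) * (x * y) = 0 := by
      rw [← hab, add_mul]
      rw [hcomm, ← mul_assoc b, hMy b hb, ← hcomm, ← mul_assoc a, hLx a ha]; simp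
    have e1 : r * y * y ∈ L := by
      apply hx2
      rw [← e0]
      have c1 : y * x * y = x * y * y := by rw [← hcomm]
      simp only [mul_assoc]
      simp only [← mul_assoc] at c1 ⊢
      rw [hyx]; noncomm_ring
    have e2 : r * x ∈ M := by
      apply hy2
      have := hLx _ e1
      rw [← this, hyx]; noncomm_ring
    rw [← mul_assoc]
    exact hMy _ e2
  have hxy0 : x * y = 0 := by
    have : x * y ∈ Ideal.span {x * y} := Ideal.mem_span_singleton_self _
    rwa [hN, Submodule.mem_bot] at this
  refine ⟨x, ?_, hLx, ?_⟩
  · rw [hyx, mul_sub, mul_one, sub_eq_zero] at hxy0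
    exact hxy0.symm
  · rwa [← hyx]

theorem mem_of_lAnn (hr : IsRightDual R) (a x : R)
    (h : ∀ y, y * a = 0 → y * x = 0) : ∃ s, x = a * s := by
  have hx : x ∈ ((Submodule.span Rᵐᵒᵖ {a} : Submodule Rᵐᵒᵖ R) : Set R) := by
    rw [← hr]
    exact fun y hy => h y (hy a (Submodule.mem_span_singleton_self a))
  obtain ⟨c, hc⟩ := Submodule.mem_span_singleton.1 hx
  exact ⟨c.unop, by rw [← hc, MulOpposite.smul_eq_mul_unop]⟩

theorem lift_of_dual (hl : IsLeftDual R) (hr : IsRightDual R) (a : R)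
    (ha : a * a - a ∈ Ideal.jacobson (⊥ : Ideal R)) :
    ∃ e : R, e * e = e ∧ e - a ∈ Ideal.jacobson (⊥ : Ideal R) := by
  have hd : Disjoint (lAnnIdeal R {a}) (lAnnIdeal R {1 - a}) := by
    rw [Submodule.disjoint_def]
    intro x h1 h2
    have h1' := h1 a rfl
    have h2' := h2 (1 - a) rfl
    rwa [mul_sub, h1', mul_one, sub_zero] at h2'
  obtain ⟨L, hLa, hL, hLmax⟩ := exists_max_disjoint _ _ hd
  obtain ⟨M, hMa, hM, hMmax⟩ := exists_max_disjoint _ _ hL.symm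
  obtain ⟨x, hxx, hx1, hx2⟩ := exists_idem hl hr L M hM.symm
    (fun T h1 h2 => hLmax T h1 (h2.mono_right hMa)) hMmax
  obtain ⟨s, hs⟩ := mem_of_lAnn hr a x (fun y hy => hx1 y (hLa (by
    intro z hz
    rw [Set.mem_singleton_iff.1 hz, hy])))
  obtain ⟨t, ht⟩ := mem_of_lAnn hr (1 - a) (1 - x) (fun y hy => hx2 y (hMa (by
    intro z hz
    rw [Set.mem_singleton_iff.1 hz, hy])))
  refine ⟨x, hxx, ?_⟩
  have e1 : a * x - x ∈ Ideal.jacobson (⊥ : Ideal R) := by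
    have : a * x - x = (a * a - a) * s := by rw [hs]; noncomm_ring
    rw [this]
    exact Ideal.mul_mem_right _ _ ha
  have e2 : a * (1 - x) ∈ Ideal.jacobson (⊥ : Ideal R) := by
    have : a * (1 - x) = -((a * a - a) * t) := by rw [ht]; noncomm_ring
    rw [this]
    exact neg_mem (Ideal.mul_mem_right _ _ ha)
  have : x - a = -((a * x - x) + a * (1 - x)) := by noncomm_ring
  rw [this]
  exact neg_mem (add_mem e1 e2)

end DualAux

/-- `R` is a dual ring iff `R` is semilocal and small dual iff `R` is
semiperfect and small dual. -/
theorem dual_tfae_semilocal_smallDual (R : Type*) [Ring R] :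
    [ IsLeftDual R ∧ IsRightDual R,
      IsSemilocalRing R ∧ (IsLeftSmallDual R ∧ IsRightSmallDual R),
      IsSemiperfectRing R ∧ (IsLeftSmallDual R ∧ IsRightSmallDual R) ].TFAE := by

  tfae_have 1 → 3 := fun ⟨hl, hr⟩ =>
    ⟨⟨DualAux.semilocal_of_dual hl hr, DualAux.lift_of_dual hl hr⟩,
      fun I _ => hl I, fun I _ => hr I⟩
  tfae_have 3 → 2 := fun ⟨h, hs⟩ => ⟨h.1, hs⟩
  tfae_have 2 → 1 := fun ⟨h, hl, hr⟩ => ⟨DualAux.leftDual_of h hl, DualAux.rightDual_of h hr⟩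
  tfae_finish
end

section
/- Let R be a right small dual ring satisfying the ascending chain condition on essential right ideals (every ascending chain of essential right ideals of R stabilizes). Then the Jacobson radical J of R is nilpotent, i.e., J^n = 0 for some n ≥ 1. -/
open Pointwise

namespace SmallDualAux

theorem mul_mem_right' {R : Type*} [Ring R] (I : Submodule Rᵐᵒᵖ R) {x : R} (r : R)
    (hx : x ∈ I) : x * r ∈ I := by
  have := I.smul_mem (MulOpposite.op r) hx
  simpa using this

theorem jac_mul {R : Type*} [Ring R] {j : R} (r : R) (hj : j ∈ Ideal.jacobson (⊥ : Ideal R)) :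
    j * r ∈ Ideal.jacobson (⊥ : Ideal R) := Ideal.mul_mem_right r _ hj

theorem jac_right_inv {R : Type*} [Ring R] {j : R} (hj : j ∈ Ideal.jacobson (⊥ : Ideal R)) :
    ∃ s : R, (1 - j) * s = 1 := by
  obtain ⟨s, hs⟩ := Ideal.exists_mul_add_sub_mem_of_mem_jacobson (-j) (neg_mem hj)
  have hs1 : s * (-j + 1) = 1 := sub_eq_zero.1 hs
  have hs2 : s = s * j + 1 := by
    rw [← hs1]; noncomm_ring
  obtain ⟨t, ht⟩ := Ideal.exists_mul_add_sub_mem_of_mem_jacobson (s * j)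
    (Ideal.mul_mem_left _ s hj)
  have ht1 : t * s = 1 := by
    rw [← hs2] at ht
    exact sub_eq_zero.1 ht
  refine ⟨s, ?_⟩
  have : t = -j + 1 := by
    calc t = t * (s * (-j + 1)) := by rw [hs1, mul_one]
      _ = -j + 1 := by rw [← mul_assoc, ht1, one_mul]
  rw [show (1 : R) - j = t by rw [this]; abel]
  exact ht1

theorem small_of_le {R : Type*} [Ring R] (I : Submodule Rᵐᵒᵖ R)
    (hI : ∀ x ∈ I, x ∈ Ideal.jacobson (⊥ : Ideal R)) : IsSmallRightIdeal R I := by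
  intro K hK hIK
  apply hK
  have h1 : (1 : R) ∈ I ⊔ K := by rw [hIK]; trivial
  obtain ⟨i, hi, k, hk, hik⟩ := Submodule.mem_sup.1 h1
  obtain ⟨s, hs⟩ := jac_right_inv (hI i hi)
  have hk' : k = 1 - i := by rw [← hik]; abel
  rw [← hk'] at hs
  have h2 : (1 : R) ∈ K := hs ▸ mul_mem_right' K s hk
  rw [eq_top_iff]
  intro x _
  simpa using mul_mem_right' K x h2

theorem exists_compl {R : Type*} [Ring R] (I : Submodule Rᵐᵒᵖ R) :
    ∃ C : Submodule Rᵐᵒᵖ R, Disjoint I C ∧ IsEssentialRightIdeal R (I ⊔ C) := by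
  obtain ⟨C, hC⟩ := zorn_le₀ {C : Submodule Rᵐᵒᵖ R | Disjoint I C} (by
    intro c hc hchain
    refine ⟨sSup c, ?_, fun z hz => le_sSup hz⟩
    exact (DirectedOn.disjoint_sSup_right hchain.directedOn).2 (fun b hb => hc hb))
  refine ⟨C, hC.prop, ?_⟩
  intro T hT hbot
  have hd : Disjoint I (C ⊔ T) :=
    Disjoint.disjoint_sup_right_of_disjoint_sup_left hC.prop (disjoint_iff.2 hbot)
  have hle : C ⊔ T ≤ C := hC.le_of_ge hd le_sup_left
  apply hT
  rw [eq_bot_iff, ← hbot]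
  exact le_inf ((le_sup_right.trans hle).trans le_sup_right) le_rfl

theorem essential_mono {R : Type*} [Ring R] {E F : Submodule Rᵐᵒᵖ R} (h : E ≤ F)
    (hE : IsEssentialRightIdeal R E) : IsEssentialRightIdeal R F := by
  intro T hT hbot
  apply hE T hT
  rw [eq_bot_iff, ← hbot]
  exact inf_le_inf_right T h

/-- Powers of the radical as right ideals. -/
def P (R : Type*) [Ring R] : ℕ → Submodule Rᵐᵒᵖ R
  | 0 => ⊤
  | k + 1 => Submodule.span Rᵐᵒᵖ
      {x | ∃ j ∈ Ideal.jacobson (⊥ : Ideal R), ∃ a ∈ P R k, x = j * a}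

/-- Left annihilators of the powers of the radical, as right ideals. -/
def L (R : Type*) [Ring R] : ℕ → Submodule Rᵐᵒᵖ R
  | 0 => ⊥
  | k + 1 =>
    { carrier := {x | ∀ j ∈ Ideal.jacobson (⊥ : Ideal R), x * j ∈ L R k}
      add_mem' := fun {a b} ha hb j hj => by
        rw [add_mul]; exact add_mem (ha j hj) (hb j hj)
      zero_mem' := fun j _ => by rw [zero_mul]; exact zero_mem _
      smul_mem' := fun c a ha j hj => by
        have := ha (c.unop * j) (Ideal.mul_mem_left _ _ hj)
        rw [← mul_assoc] at this
        exact this }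

theorem mem_L_succ {R : Type*} [Ring R] {k : ℕ} {x : R} :
    x ∈ L R (k + 1) ↔ ∀ j ∈ Ideal.jacobson (⊥ : Ideal R), x * j ∈ L R k := Iff.rfl

theorem mem_P_succ {R : Type*} [Ring R] {k : ℕ} {j a : R}
    (hj : j ∈ Ideal.jacobson (⊥ : Ideal R)) (ha : a ∈ P R k) : j * a ∈ P R (k + 1) :=
  Submodule.subset_span ⟨j, hj, a, ha, rfl⟩

theorem P_succ_le {R : Type*} [Ring R] {k : ℕ} {B : Submodule Rᵐᵒᵖ R}
    (h : ∀ j ∈ Ideal.jacobson (⊥ : Ideal R), ∀ a ∈ P R k, j * a ∈ B) : P R (k + 1) ≤ B := by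
  rw [P, Submodule.span_le]
  rintro _ ⟨j, hj, a, ha, rfl⟩
  exact h j hj a ha

theorem L_mono {R : Type*} [Ring R] : Monotone (L R) := by
  refine monotone_nat_of_le_succ fun k => ?_
  induction k with
  | zero => exact bot_le
  | succ k ih => exact fun x hx j hj => ih (hx j hj)

theorem mem_L_iff {R : Type*} [Ring R] (k : ℕ) (x : R) :
    x ∈ L R k ↔ x ∈ lAnn R (P R k : Set R) := by
  induction k generalizing x with
  | zero =>
    constructor
    · intro hx y _
      have : x = 0 := hx
      rw [this, zero_mul]
    · intro hx
      have := hx 1 (Submodule.mem_top)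
      rw [mul_one] at this
      rw [this]; exact zero_mem _
  | succ k ih =>
    rw [mem_L_succ]
    constructor
    · intro hx y hy0
      have hy : y ∈ P R (k + 1) := hy0
      clear hy0
      rw [P] at hy
      induction hy using Submodule.span_induction with
      | mem y hy =>
        obtain ⟨j, hj, a, ha, rfl⟩ := hy
        rw [← mul_assoc]
        exact (ih _).1 (hx j hj) a ha
      | zero => exact mul_zero x
      | add a b _ _ ha hb => rw [mul_add, ha, hb, add_zero]
      | smul c a _ ha =>
        have : x * (a * c.unop) = 0 := by rw [← mul_assoc, ha, zero_mul]
        exact this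
    · intro hx j hj
      rw [ih]
      intro a ha
      rw [mul_assoc]
      exact hx _ (mem_P_succ hj ha)

theorem P_le_jac {R : Type*} [Ring R] (k : ℕ) :
    ∀ x ∈ P R (k + 1), x ∈ Ideal.jacobson (⊥ : Ideal R) := by
  intro x hx
  rw [P] at hx
  induction hx using Submodule.span_induction with
  | mem y hy =>
    obtain ⟨j, hj, a, ha, rfl⟩ := hy
    exact jac_mul a hj
  | zero => exact zero_mem _
  | add a b _ _ ha hb => exact add_mem ha hb
  | smul c a _ ha => exact jac_mul c.unop ha

/-- The right ideal spanned by `A * J`. -/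
def rad (R : Type*) [Ring R] (A : Submodule Rᵐᵒᵖ R) : Submodule Rᵐᵒᵖ R :=
  Submodule.span Rᵐᵒᵖ {x | ∃ a ∈ A, ∃ j ∈ Ideal.jacobson (⊥ : Ideal R), x = a * j}

theorem P_le_rad {R : Type*} [Ring R] (k : ℕ) : P R (k + 1) ≤ rad R (P R k) := by
  induction k with
  | zero =>
    refine P_succ_le fun j hj a _ => ?_
    exact Submodule.subset_span ⟨1, Submodule.mem_top, j * a, jac_mul a hj, by rw [one_mul]⟩
  | succ k ih =>
    refine P_succ_le fun j hj a ha => ?_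
    have ha' := ih ha
    clear ha
    rw [rad] at ha'
    induction ha' using Submodule.span_induction with
    | mem y hy =>
      obtain ⟨b, hb, i, hi, rfl⟩ := hy
      exact Submodule.subset_span ⟨j * b, mem_P_succ hj hb, i, hi, by rw [mul_assoc]⟩
    | zero => rw [mul_zero]; exact zero_mem _
    | add a b _ _ ha hb => rw [mul_add]; exact add_mem ha hb
    | smul c a _ ha =>
      have := mul_mem_right' (rad R (P R (k + 1))) c.unop ha
      rw [mul_assoc] at this
      exact this

theorem prod_mem_P {R : Type*} [Ring R] (n : ℕ) (a : Fin n → R)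
    (ha : ∀ i, a i ∈ Ideal.jacobson (⊥ : Ideal R)) : (List.ofFn a).prod ∈ P R n := by
  induction n with
  | zero => exact Submodule.mem_top
  | succ n ih =>
    rw [List.ofFn_succ, List.prod_cons]
    exact mem_P_succ (ha 0) (ih _ fun i => ha _)

theorem le_essential {R : Type*} [Ring R]
    (acc : ∀ f : ℕ →o Submodule Rᵐᵒᵖ R, (∀ k, IsEssentialRightIdeal R (f k)) →
      ∃ N : ℕ, ∀ m : ℕ, N ≤ m → f m = f N)
    (A : Submodule Rᵐᵒᵖ R) (hA : A ≤ rad R A) (E : Submodule Rᵐᵒᵖ R)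
    (hE : IsEssentialRightIdeal R E) : A ≤ E := by
  by_contra hAE
  have wf : WellFoundedGT {M : Submodule Rᵐᵒᵖ R // IsEssentialRightIdeal R M} := by
    rw [wellFoundedGT_iff_monotone_chain_condition]
    intro f
    obtain ⟨N, hN⟩ := acc ⟨fun k => (f k).1, fun a b hab => f.monotone hab⟩ (fun k => (f k).2)
    exact ⟨N, fun m hm => Subtype.ext (hN m hm).symm⟩
  obtain ⟨M, ⟨hEM, hMB⟩, hmax⟩ := wf.wf.has_min
    {M : {M : Submodule Rᵐᵒᵖ R // IsEssentialRightIdeal R M} | E ≤ M.1 ∧ M.1 < A ⊔ E}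
    ⟨⟨E, hE⟩, le_rfl, right_lt_sup.2 hAE⟩
  have key : ∀ b ∈ A, ∀ j ∈ Ideal.jacobson (⊥ : Ideal R), b * j ∈ M.1 := by
    intro b hb j hj
    by_contra hbj
    have hlt : M.1 < M.1 ⊔ Submodule.span Rᵐᵒᵖ {b * j} := by
      rw [left_lt_sup, Submodule.span_singleton_le_iff_mem]; exact hbj
    have hle : M.1 ⊔ Submodule.span Rᵐᵒᵖ {b * j} ≤ A ⊔ E := by
      refine sup_le hMB.le ?_
      rw [Submodule.span_singleton_le_iff_mem]
      exact Submodule.mem_sup_left (mul_mem_right' A j hb)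
    have heq : M.1 ⊔ Submodule.span Rᵐᵒᵖ {b * j} = A ⊔ E := by
      by_contra hne
      exact hmax ⟨M.1 ⊔ Submodule.span Rᵐᵒᵖ {b * j}, essential_mono le_sup_left M.2⟩
        ⟨hEM.trans le_sup_left, lt_of_le_of_ne hle hne⟩ hlt
    have hbB : b ∈ M.1 ⊔ Submodule.span Rᵐᵒᵖ {b * j} := heq ▸ Submodule.mem_sup_left hb
    obtain ⟨m, hm, y, hy, hmy⟩ := Submodule.mem_sup.1 hbB
    obtain ⟨c, rfl⟩ := Submodule.mem_span_singleton.1 hy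
    have hmy : m + b * j * c.unop = b := hmy
    obtain ⟨s, hs⟩ := jac_right_inv (jac_mul c.unop hj)
    have hm' : m = b * (1 - j * c.unop) := by
      rw [mul_sub, mul_one, ← mul_assoc]; exact eq_sub_of_add_eq hmy
    have hbM : b ∈ M.1 := by
      have := mul_mem_right' M.1 s hm
      rwa [hm', mul_assoc, hs, mul_one] at this
    exact hbj (mul_mem_right' M.1 j hbM)
  have hAM : A ≤ M.1 := by
    refine hA.trans ?_
    rw [rad, Submodule.span_le]
    rintro _ ⟨a, ha, j, hj, rfl⟩
    exact key a ha j hj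
  exact absurd hMB (not_lt_of_ge (sup_le hAM hEM))

theorem eq_bot {R : Type*} [Ring R]
    (acc : ∀ f : ℕ →o Submodule Rᵐᵒᵖ R, (∀ k, IsEssentialRightIdeal R (f k)) →
      ∃ N : ℕ, ∀ m : ℕ, N ≤ m → f m = f N)
    (A : Submodule Rᵐᵒᵖ R) (hA : A ≤ rad R A) : A = ⊥ := by
  rw [eq_bot_iff]
  refine hA.trans ?_
  rw [rad, Submodule.span_le]
  rintro _ ⟨a, ha, j, hj, rfl⟩
  obtain ⟨C, hd, hC⟩ := exists_compl (Submodule.span Rᵐᵒᵖ {a * j})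
  obtain ⟨y, hy, c, hc, hyc⟩ := Submodule.mem_sup.1 (le_essential acc A hA _ hC ha)
  obtain ⟨r, rfl⟩ := Submodule.mem_span_singleton.1 hy
  have hyc : a * j * r.unop + c = a := hyc
  obtain ⟨s, hs⟩ := jac_right_inv (jac_mul r.unop hj)
  have hc' : c = a * (1 - j * r.unop) := by
    rw [mul_sub, mul_one, ← mul_assoc]; exact eq_sub_of_add_eq' hyc
  have haC : a ∈ C := by
    have := mul_mem_right' C s hc
    rwa [hc', mul_assoc, hs, mul_one] at this
  exact Submodule.disjoint_def.1 hd _ (Submodule.mem_span_singleton_self _)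
    (mul_mem_right' C j haC)

end SmallDualAux

open SmallDualAux in
/-- If `R` is right small dual and satisfies ACC on essential right ideals, then `J` is nilpotent. -/
theorem rightSmallDual_acc_essential_jacobson_nilpotent (R : Type*) [Ring R]
    (h : IsRightSmallDual R)
    (acc : ∀ f : ℕ →o Submodule Rᵐᵒᵖ R, (∀ k, IsEssentialRightIdeal R (f k)) →
      ∃ N : ℕ, ∀ m : ℕ, N ≤ m → f m = f N) :
    ∃ n : ℕ, 1 ≤ n ∧ ∀ a : Fin n → R,
      (∀ i, a i ∈ Ideal.jacobson (⊥ : Ideal R)) → (List.ofFn a).prod = 0 := by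
  obtain ⟨C, hd, hC⟩ := exists_compl (L R 1)
  have hdis : ∀ k, ∀ x ∈ L R k, x ∈ C → x = 0 := by
    intro k
    induction k with
    | zero => exact fun x hx _ => hx
    | succ k ih =>
      intro x hx hxC
      refine Submodule.disjoint_def.1 hd x ?_ hxC
      intro j hj
      exact ih _ (hx j hj) (mul_mem_right' C j hxC)
  obtain ⟨N, hN⟩ := acc ⟨fun k => L R (k + 1) ⊔ C, fun a b hab =>
    sup_le_sup_right (L_mono (Nat.succ_le_succ hab)) C⟩
    (fun k => essential_mono (sup_le_sup_right (L_mono (Nat.succ_le_succ (Nat.zero_le k))) C) hC)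
  have hstab : L R (N + 2) = L R (N + 1) := by
    refine le_antisymm ?_ (L_mono (Nat.le_succ _))
    intro x hx
    have hN1 : L R (N + 1 + 1) ⊔ C = L R (N + 1) ⊔ C := hN (N + 1) (Nat.le_succ N)
    have hx' : x ∈ L R (N + 1) ⊔ C := hN1 ▸ Submodule.mem_sup_left hx
    obtain ⟨l, hl, c, hc, rfl⟩ := Submodule.mem_sup.1 hx'
    have hcL : c ∈ L R (N + 2) := by
      have := sub_mem hx (L_mono (Nat.le_succ _) hl : l ∈ L R (N + 2))
      rwa [add_sub_cancel_left] at this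
    rw [hdis _ c hcL hc, add_zero]
    exact hl
  have hann : lAnn R (P R (N + 2) : Set R) = lAnn R (P R (N + 1) : Set R) := by
    ext x
    rw [← mem_L_iff, ← mem_L_iff, hstab]
  have hP : P R (N + 1) = P R (N + 2) := by
    apply SetLike.coe_injective
    rw [← h _ (small_of_le _ (P_le_jac N)), ← h _ (small_of_le _ (P_le_jac (N + 1))), hann]
  have hbot : P R (N + 1) = ⊥ := by
    apply eq_bot acc
    exact hP.le.trans (P_le_rad (N + 1))
  refine ⟨N + 1, Nat.succ_le_succ (Nat.zero_le N), fun a ha => ?_⟩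
  have := prod_mem_P (N + 1) a ha
  rw [hbot] at this
  exact this
end
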